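/- Every point of the curve {(p(s), q(s)) : s ∈ ℝ} other than (0, 0) and (−1, −163/4) has exactly one inverse image under the Pinchuk map: if α = (p(s), q(s)) for some s ∈ ℝ and α ∉ {(0, 0), (−1, −163/4)}, then there exists a unique (x, y) ∈ ℝ² with 𝒫(x, y) = α. -/

import Mathlib

open Filter Topology

noncomputable section

/-- `t = x·y − 1` -/
def tP (x y : ℝ) : ℝ := x * y - 1

/-- `h = t·(x·t + 1)` -/
def hP (x y : ℝ) : ℝ := tP x y * (x * tP x y + 1)

/-- `f = (x·t + 1)²·(t² + y)` -/
def fP (x y : ℝ) : ℝ := (x * tP x y + 1) ^ 2 * ((tP x y) ^ 2 + y)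

/-- First component `P = f + h` of the Pinchuk map. -/
def PP (x y : ℝ) : ℝ := fP x y + hP x y

/-- Second component `Q` of the Pinchuk map. -/
def QP (x y : ℝ) : ℝ :=
  -(tP x y) ^ 2 - 6 * tP x y * hP x y * (hP x y + 1) - 170 * fP x y * hP x y
    - 91 * (hP x y) ^ 2 - 195 * fP x y * (hP x y) ^ 2 - 69 * (hP x y) ^ 3
    - 75 * fP x y * (hP x y) ^ 3 - (75 / 4) * (hP x y) ^ 4

/-- The Pinchuk map `𝒫 = (P, Q) : ℝ² → ℝ²`. -/
def Pinchuk (z : ℝ × ℝ) : ℝ × ℝ := (PP z.1 z.2, QP z.1 z.2)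
/-- `p(s) = s² − 1`. -/
def pParam (s : ℝ) : ℝ := s ^ 2 - 1

/-- `q(s) = −75s⁵ + (345/4)s⁴ − 29s³ + (117/2)s² − 163/4`. -/
def qParam (s : ℝ) : ℝ :=
  -75 * s ^ 5 + (345 / 4) * s ^ 4 - 29 * s ^ 3 + (117 / 2) * s ^ 2 - 163 / 4

/-- `t` along the level set `P = c`, as a function of `h`. -/
def TC (c h : ℝ) : ℝ := h * (c - 2 * h - h ^ 2) / (c - h)

/-- `Q` along the level set `P = c`, as a function of `h`. -/
def GC (c h : ℝ) : ℝ :=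
  -(TC c h) ^ 2 - 6 * TC c h * h * (h + 1) - 170 * (c - h) * h
    - 91 * h ^ 2 - 195 * (c - h) * h ^ 2 - 69 * h ^ 3
    - 75 * (c - h) * h ^ 3 - (75 / 4) * h ^ 4

lemma hasDerivAt_TC (c h : ℝ) (hc : c - h ≠ 0) :
    HasDerivAt (TC c) (((c - 4 * h - 3 * h ^ 2) * (c - h) + h * (c - 2 * h - h ^ 2)) /
      (c - h) ^ 2) h := by
  have hi : HasDerivAt (fun u : ℝ => u) 1 h := hasDerivAt_id h
  have h1 := ((hi.fun_mul (((hi.const_mul 2).const_sub c).fun_sub (hi.fun_pow 2))).fun_div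
    (hi.const_sub c) hc)
  refine HasDerivAt.congr_deriv (f := TC c) h1 ?_
  simp
  ring

lemma hasDerivAt_GC (c h : ℝ) (hc : c - h ≠ 0) :
    HasDerivAt (GC c) (-((TC c h) ^ 2 + (TC c h + (c - h) * (13 + 15 * h)) ^ 2 + (c - h) ^ 2)
      / (c - h)) h := by
  have hi : HasDerivAt (fun u : ℝ => u) 1 h := hasDerivAt_id h
  have hT := hasDerivAt_TC c h hc
  have hf := hi.const_sub c
  have h1 := ((((((((hT.fun_pow 2).fun_neg).fun_sub
    (((hT.const_mul 6).fun_mul hi).fun_mul (hi.add_const 1))).fun_sub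
    ((hf.const_mul 170).fun_mul hi)).fun_sub ((hi.fun_pow 2).const_mul 91)).fun_sub
    ((hf.const_mul 195).fun_mul (hi.fun_pow 2))).fun_sub ((hi.fun_pow 3).const_mul 69)).fun_sub
    ((hf.const_mul 75).fun_mul (hi.fun_pow 3))).fun_sub ((hi.fun_pow 4).const_mul (75 / 4))
  refine HasDerivAt.congr_deriv (f := GC c) h1 ?_
  simp only [TC, show 2 - 1 = 1 from rfl, show 3 - 1 = 2 from rfl, show 4 - 1 = 3 from rfl, pow_one]
  push_cast
  field_simp
  ring

lemma GC_strictMonoOn (c : ℝ) : StrictMonoOn (GC c) (Set.Ioi c) := by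
  apply strictMonoOn_of_deriv_pos (convex_Ioi c)
  · intro h hh
    exact (hasDerivAt_GC c h (by have : c < h := hh; intro h0; linarith)).continuousAt.continuousWithinAt
  · intro h hh
    rw [interior_Ioi] at hh
    have hh : c < h := hh
    rw [(hasDerivAt_GC c h (by intro h0; linarith)).deriv]
    have : 0 < (c - h) ^ 2 := by have : c - h ≠ 0 := (by intro h0; linarith); positivity
    apply div_pos_of_neg_of_neg <;> nlinarith [sq_nonneg (TC c h), sq_nonneg (TC c h + (c - h) * (13 + 15 * h))]

lemma GC_strictAntiOn (c : ℝ) : StrictAntiOn (GC c) (Set.Iio c) := by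
  apply strictAntiOn_of_deriv_neg (convex_Iio c)
  · intro h hh
    exact (hasDerivAt_GC c h (by have : h < c := hh; intro h0; linarith)).continuousAt.continuousWithinAt
  · intro h hh
    rw [interior_Iio] at hh
    have hh : h < c := hh
    rw [(hasDerivAt_GC c h (by intro h0; linarith)).deriv]
    have : 0 < (c - h) ^ 2 := by apply pow_pos; linarith
    apply div_neg_of_neg_of_pos <;> nlinarith [sq_nonneg (TC c h), sq_nonneg (TC c h + (c - h) * (13 + 15 * h))]

/-- `(c - h)² (GC c h - q)` as a polynomial. -/
def RC (c q h : ℝ) : ℝ :=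
  -(h * (c - 2 * h - h ^ 2)) ^ 2 - 6 * (h * (c - 2 * h - h ^ 2)) * (c - h) * h * (h + 1)
  + (c - h) ^ 2 * (- 170 * (c - h) * h
    - 91 * h ^ 2 - 195 * (c - h) * h ^ 2 - 69 * h ^ 3
    - 75 * (c - h) * h ^ 3 - (75 / 4) * h ^ 4 - q)

lemma RC_eq (c q h : ℝ) (hc : c - h ≠ 0) : RC c q h = (c - h) ^ 2 * (GC c h - q) := by
  simp only [RC, GC, TC]
  field_simp
  ring

lemma GC_of_RC (c q h : ℝ) (hc : c - h ≠ 0) (hr : RC c q h = 0) : GC c h = q := by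
  rw [RC_eq c q h hc] at hr
  have : (c - h) ^ 2 ≠ 0 := pow_ne_zero _ hc
  have := (mul_eq_zero.mp hr).resolve_left this
  linarith

lemma RC_cont (c q : ℝ) : Continuous (RC c q) := by
  unfold RC; fun_prop

/-- A sextic with positive leading coefficient tends to infinity. -/
lemma sextic_tendsto (k a b c d e f : ℝ) (hk : 0 < k) :
    Tendsto (fun h : ℝ => k * h ^ 6 + a * h ^ 5 + b * h ^ 4 + c * h ^ 3 + d * h ^ 2 + e * h + f)
      atTop atTop := by
  have hl : Tendsto (fun h : ℝ => h ^ 6 * (k + a * h⁻¹ + b * h⁻¹ ^ 2 + c * h⁻¹ ^ 3 + d * h⁻¹ ^ 4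
      + e * h⁻¹ ^ 5 + f * h⁻¹ ^ 6)) atTop atTop := by
    refine Tendsto.atTop_mul_pos hk (tendsto_pow_atTop (by norm_num)) ?_
    have hc : Continuous (fun u : ℝ => k + a * u + b * u ^ 2 + c * u ^ 3 + d * u ^ 4
      + e * u ^ 5 + f * u ^ 6) := by fun_prop
    have := (hc.tendsto 0).comp (tendsto_inv_atTop_zero (𝕜 := ℝ))
    simpa [Function.comp_def] using this
  refine hl.congr' ?_
  filter_upwards [eventually_gt_atTop 0] with h hh
  field_simp

lemma RC_tendsto_top (c q : ℝ) : Tendsto (RC c q) atTop atTop := by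
  have := sextic_tendsto (197 / 4) ((104) * c ^ 0 * q ^ 0 + (-363/2) * c ^ 1 * q ^ 0) ((-421) * c ^ 1 * q ^ 0 + (63) * c ^ 0 * q ^ 0 + (825/4) * c ^ 2 * q ^ 0) ((-306) * c ^ 1 * q ^ 0 + (510) * c ^ 2 * q ^ 0 + (-75) * c ^ 3 * q ^ 0) ((412) * c ^ 2 * q ^ 0 + (-195) * c ^ 3 * q ^ 0 + (-1) * c ^ 0 * q ^ 1) ((-170) * c ^ 3 * q ^ 0 + (2) * c ^ 1 * q ^ 1) ((-1) * c ^ 2 * q ^ 1) (by norm_num)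
  refine this.congr (fun h => ?_)
  unfold RC; ring

lemma RC_tendsto_bot (c q : ℝ) : Tendsto (RC c q) atBot atTop := by
  have := (sextic_tendsto (197 / 4) (-((104) * c ^ 0 * q ^ 0 + (-363/2) * c ^ 1 * q ^ 0)) ((-421) * c ^ 1 * q ^ 0 + (63) * c ^ 0 * q ^ 0 + (825/4) * c ^ 2 * q ^ 0) (-((-306) * c ^ 1 * q ^ 0 + (510) * c ^ 2 * q ^ 0 + (-75) * c ^ 3 * q ^ 0)) ((412) * c ^ 2 * q ^ 0 + (-195) * c ^ 3 * q ^ 0 + (-1) * c ^ 0 * q ^ 1) (-((-170) * c ^ 3 * q ^ 0 + (2) * c ^ 1 * q ^ 1)) ((-1) * c ^ 2 * q ^ 1)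
    (by norm_num)).comp tendsto_neg_atBot_atTop
  refine this.congr (fun h => ?_)
  simp only [Function.comp]
  unfold RC; ring

lemma RC_neg (c q : ℝ) (h0 : c ≠ 0) (h1 : c + 1 ≠ 0) : RC c q c < 0 := by
  have : RC c q c = - (c ^ 2 * (c + 1)) ^ 2 := by unfold RC; ring
  rw [this]
  have : 0 < (c ^ 2 * (c + 1)) ^ 2 := by positivity
  linarith

lemma root_right (c q : ℝ) (h0 : c ≠ 0) (h1 : c + 1 ≠ 0) : ∃ h, c < h ∧ GC c h = q := by
  obtain ⟨M, hM, hcM⟩ := ((RC_tendsto_top c q).eventually_gt_atTop 0 |>.and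
    (eventually_gt_atTop c)).exists
  have hn := RC_neg c q h0 h1
  obtain ⟨h, ⟨ha, hb⟩, hr⟩ := intermediate_value_Icc hcM.le (RC_cont c q).continuousOn
    (show (0 : ℝ) ∈ Set.Icc _ _ from ⟨hn.le, hM.le⟩)
  have hne : h ≠ c := by rintro rfl; linarith
  have : c < h := lt_of_le_of_ne ha hne.symm
  exact ⟨h, this, GC_of_RC c q h (by intro h0; linarith) hr⟩

lemma root_left (c q : ℝ) (h0 : c ≠ 0) (h1 : c + 1 ≠ 0) : ∃ h, h < c ∧ GC c h = q := by
  obtain ⟨M, hM, hcM⟩ := ((RC_tendsto_bot c q).eventually_gt_atTop 0 |>.and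
    (eventually_lt_atBot c)).exists
  have hn := RC_neg c q h0 h1
  obtain ⟨h, ⟨ha, hb⟩, hr⟩ := intermediate_value_Icc' hcM.le (RC_cont c q).continuousOn
    (show (0 : ℝ) ∈ Set.Icc _ _ from ⟨hn.le, hM.le⟩)
  have hne : h ≠ c := by rintro rfl; linarith
  have : h < c := lt_of_le_of_ne hb hne
  exact ⟨h, this, GC_of_RC c q h (by intro h; linarith) hr⟩

lemma root_zero : ∃ h, 0 < h ∧ GC 0 h = 208 := by
  have hc : Continuous (fun h : ℝ => 197 * h ^ 3 + 22 * h ^ 2 + 208 * h - 416) := by fun_prop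
  obtain ⟨h, ⟨ha, hb⟩, hr⟩ := intermediate_value_Icc (show (0 : ℝ) ≤ 2 by norm_num) hc.continuousOn
    (show (0 : ℝ) ∈ Set.Icc _ _ by constructor <;> norm_num)
  simp only at hr
  have hne : h ≠ 0 := by rintro rfl; norm_num at hr
  refine ⟨h, lt_of_le_of_ne ha hne.symm, GC_of_RC _ _ _ (by simpa using hne) ?_⟩
  unfold RC
  linear_combination (h ^ 2 * (h + 2) / 4) * hr

lemma GC_special (s : ℝ) : GC (pParam s) (s - 1) = qParam s := by
  have : TC (pParam s) (s - 1) = 0 := by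
    have : pParam s - 2 * (s - 1) - (s - 1) ^ 2 = 0 := by unfold pParam; ring
    simp [TC, this]
  rw [GC, this]
  unfold pParam qParam
  ring

lemma GC_special' (s : ℝ) : GC (pParam s) (-s - 1) = qParam (-s) := by
  have : TC (pParam s) (-s - 1) = 0 := by
    have : pParam s - 2 * (-s - 1) - (-s - 1) ^ 2 = 0 := by unfold pParam; ring
    simp [TC, this]
  rw [GC, this]
  unfold pParam qParam
  ring

/-- Existence of a second root, on the other side of the pole. -/
lemma exists_root (s : ℝ) (hs0 : s ≠ 0) (hs1 : s ≠ 1) :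
    ∃ h, GC (pParam s) h = qParam s ∧ h ≠ s - 1 ∧ pParam s - h ≠ 0 := by
  have e : pParam s - (s - 1) = s * (s - 1) := by unfold pParam; ring
  by_cases hm : s = -1
  · subst hm
    obtain ⟨h, hp, hg⟩ := root_zero
    have e1 : pParam (-1) = 0 := by norm_num [pParam]
    have e2 : qParam (-1) = 208 := by norm_num [qParam]
    rw [e1, e2]
    exact ⟨h, hg, by intro h0; linarith, by intro h0; linarith⟩
  have hc0 : pParam s ≠ 0 := by
    have : pParam s = (s - 1) * (s + 1) := by unfold pParam; ring
    rw [this]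
    exact mul_ne_zero (sub_ne_zero.mpr hs1) (fun h => hm (by linarith))
  have hc1 : pParam s + 1 ≠ 0 := by
    have : pParam s + 1 = s ^ 2 := by unfold pParam; ring
    rw [this]; positivity
  have hne : s * (s - 1) ≠ 0 := mul_ne_zero hs0 (sub_ne_zero.mpr hs1)
  rcases lt_or_gt_of_ne hne with hlt | hgt
  · obtain ⟨h, h1, h2⟩ := root_left (pParam s) (qParam s) hc0 hc1
    exact ⟨h, h2, by intro h'; linarith, by intro h'; linarith⟩
  · obtain ⟨h, h1, h2⟩ := root_right (pParam s) (qParam s) hc0 hc1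
    exact ⟨h, h2, by intro h'; linarith, by intro h'; linarith⟩

/-- Any two roots different from `s - 1` coincide. -/
lemma root_unique (s : ℝ) (hs0 : s ≠ 0) (hs1 : s ≠ 1) (a b : ℝ)
    (ha : GC (pParam s) a = qParam s) (ha1 : a ≠ s - 1) (ha2 : pParam s - a ≠ 0)
    (hb : GC (pParam s) b = qParam s) (hb1 : b ≠ s - 1) (hb2 : pParam s - b ≠ 0) : a = b := by
  have e : pParam s - (s - 1) = s * (s - 1) := by unfold pParam; ring
  have hne : s * (s - 1) ≠ 0 := mul_ne_zero hs0 (sub_ne_zero.mpr hs1)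
  have h0 := GC_special s
  have i1 := (GC_strictMonoOn (pParam s)).injOn
  have i2 := (GC_strictAntiOn (pParam s)).injOn
  have ha2 : a ≠ pParam s := fun h => ha2 (by linarith)
  have hb2 : b ≠ pParam s := fun h => hb2 (by linarith)
  rcases lt_or_gt_of_ne hne with hlt | hgt
  · have h0m : s - 1 ∈ Set.Ioi (pParam s) := by rw [Set.mem_Ioi]; linarith
    rcases lt_or_gt_of_ne ha2 with h1 | h1
    · rcases lt_or_gt_of_ne hb2 with h2 | h2
      · exact i2 h1 h2 (ha.trans hb.symm)
      · exact absurd (i1 h2 h0m (hb.trans h0.symm)) hb1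
    · exact absurd (i1 h1 h0m (ha.trans h0.symm)) ha1
  · have h0m : s - 1 ∈ Set.Iio (pParam s) := by rw [Set.mem_Iio]; linarith
    rcases lt_or_gt_of_ne ha2 with h1 | h1
    · exact absurd (i2 h1 h0m (ha.trans h0.symm)) ha1
    · rcases lt_or_gt_of_ne hb2 with h2 | h2
      · exact absurd (i2 h2 h0m (hb.trans h0.symm)) hb1
      · exact i1 h1 h2 (ha.trans hb.symm)

/-- What a preimage looks like. -/
lemma preimage_data (s : ℝ) (hs0 : s ≠ 0) (hs1 : s ≠ 1) (x y : ℝ)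
    (hP1 : PP x y = pParam s) (hQ1 : QP x y = qParam s) :
    GC (pParam s) (hP x y) = qParam s ∧ hP x y ≠ s - 1 ∧ pParam s - hP x y ≠ 0 ∧
    x = (1 + hP x y) * (pParam s - hP x y) / (pParam s - 2 * hP x y - hP x y ^ 2) ^ 2 ∧
    y = (pParam s - 2 * hP x y - hP x y ^ 2) ^ 2 * (pParam s - hP x y - hP x y ^ 2)
      / (pParam s - hP x y) ^ 2 := by
  have hf : pParam s - hP x y = fP x y := by rw [← hP1]; unfold PP; ring
  have hD : pParam s - 2 * hP x y - hP x y ^ 2 =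
      (x * tP x y + 1) * ((tP x y) ^ 2 + y) := by
    rw [← hP1]; unfold PP fP hP tP; ring
  have hfy : pParam s - hP x y - hP x y ^ 2 = (x * tP x y + 1) ^ 2 * y := by
    rw [← hP1]; unfold PP fP hP tP; ring
  have hA : x * tP x y + 1 ≠ 0 := by
    intro h
    have h1 : hP x y = 0 := by simp [hP, h]
    have h2 : fP x y = 0 := by simp [fP, h]
    have h3 : (s - 1) * (s + 1) = 0 := by
      have : pParam s = 0 := by rw [← hP1, PP, h1, h2]; ring
      rw [← this]; unfold pParam; ring
    have h4 : s = -1 := by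
      rcases mul_eq_zero.mp h3 with h | h
      · exact absurd (by linarith) hs1
      · linarith
    rw [QP, h1, h2, h4] at hQ1
    norm_num [qParam] at hQ1
    nlinarith [sq_nonneg (tP x y)]
  have hB : (tP x y) ^ 2 + y ≠ 0 := by
    intro h
    have h1 : 1 + hP x y = x * ((tP x y) ^ 2 + y) := by unfold hP tP; ring
    have h2 : fP x y = 0 := by simp [fP, h]
    rw [h, mul_zero] at h1
    have : s ^ 2 = 0 := by
      have : pParam s = -1 := by rw [← hP1, PP, h2]; linarith
      unfold pParam at this; linarith
    exact hs0 (by simpa using this)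
  have hf0 : pParam s - hP x y ≠ 0 := by
    rw [hf]; unfold fP; exact mul_ne_zero (pow_ne_zero _ hA) hB
  have hD0 : pParam s - 2 * hP x y - hP x y ^ 2 ≠ 0 := by
    rw [hD]; exact mul_ne_zero hA hB
  have hT : TC (pParam s) (hP x y) = tP x y := by
    unfold TC
    rw [div_eq_iff hf0, hf, hD]
    unfold fP hP; ring
  refine ⟨?_, ?_, hf0, ?_, ?_⟩
  · rw [← hQ1, GC, hT, hf, QP]
  · intro h
    apply hD0
    rw [h]; unfold pParam; ring
  · rw [eq_div_iff (pow_ne_zero _ hD0), hf, hD]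
    unfold fP hP tP; ring
  · rw [eq_div_iff (pow_ne_zero _ hf0), hfy, hf, hD]
    unfold fP; ring

/-- Building the preimage from `h`. -/
lemma preimage_build (c h : ℝ) (hf : c - h ≠ 0) (hD : c - 2 * h - h ^ 2 ≠ 0) :
    Pinchuk ((1 + h) * (c - h) / (c - 2 * h - h ^ 2) ^ 2,
      (c - 2 * h - h ^ 2) ^ 2 * (c - h - h ^ 2) / (c - h) ^ 2) = (c, GC c h) := by
  obtain ⟨D, hDe⟩ : ∃ D, D = c - 2 * h - h ^ 2 := ⟨_, rfl⟩
  obtain ⟨f, hfe⟩ : ∃ f, f = c - h := ⟨_, rfl⟩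
  have e4 : D = f - h - h ^ 2 := by rw [hDe, hfe]; ring
  rw [← hDe] at hD
  rw [← hfe] at hf
  have ht : tP ((1 + h) * f / D ^ 2) (D ^ 2 * (f - h ^ 2) / f ^ 2) = h * D / f := by
    unfold tP; field_simp; rw [e4]; ring
  have hA : (1 + h) * f / D ^ 2 * (h * D / f) + 1 = f / D := by
    field_simp; rw [e4]; ring
  have hh : hP ((1 + h) * f / D ^ 2) (D ^ 2 * (f - h ^ 2) / f ^ 2) = h := by
    unfold hP; rw [ht, hA]; field_simp
  have hff : fP ((1 + h) * f / D ^ 2) (D ^ 2 * (f - h ^ 2) / f ^ 2) = f := by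
    unfold fP; rw [ht, hA]; field_simp; ring
  have hT : TC c h = h * D / f := by rw [TC, hDe, hfe]
  rw [← hDe, ← hfe, Pinchuk]
  ext
  · simp only [PP, hh, hff]; rw [hfe]; ring
  · simp only [QP, hh, hff, ht]; rw [GC, hT, hfe]

/-- every point of the curve `{(p(s), q(s)) : s ∈ ℝ}` other than
`(0, 0)` and `(−1, −163/4)` has exactly one inverse image under the Pinchuk map. -/
theorem pinchuk_curve_unique_preimage (s : ℝ)
    (h₀ : (pParam s, qParam s) ≠ ((0 : ℝ), (0 : ℝ)))
    (h₁ : (pParam s, qParam s) ≠ ((-1 : ℝ), (-163 / 4 : ℝ))) :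
    ∃! z : ℝ × ℝ, Pinchuk z = (pParam s, qParam s) := by
  have hs0 : s ≠ 0 := by
    rintro rfl
    exact h₁ (by ext <;> norm_num [pParam, qParam])
  have hs1 : s ≠ 1 := by
    rintro rfl
    exact h₀ (by ext <;> norm_num [pParam, qParam])
  obtain ⟨h, hg, hne, hf⟩ := exists_root s hs0 hs1
  have hD : pParam s - 2 * h - h ^ 2 ≠ 0 := by
    have e : pParam s - 2 * h - h ^ 2 = (s - 1 - h) * (s + 1 + h) := by unfold pParam; ring
    rw [e]
    refine mul_ne_zero (fun h' => hne (by linarith)) (fun h' => ?_)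
    have e2 : h = -s - 1 := by linarith
    rw [e2, GC_special'] at hg
    have e3 : s ^ 3 * (150 * s ^ 2 + 58) = 0 := by
      unfold qParam at hg; linear_combination hg
    have : 150 * s ^ 2 + 58 ≠ 0 := by positivity
    exact mul_ne_zero (pow_ne_zero 3 hs0) this e3
  refine ⟨_, (preimage_build (pParam s) h hf hD).trans (by rw [hg]), ?_⟩
  rintro ⟨x, y⟩ hxy
  have hP1 : PP x y = pParam s := congrArg Prod.fst hxy
  have hQ1 : QP x y = qParam s := congrArg Prod.snd hxy
  obtain ⟨a1, a2, a3, a4, a5⟩ := preimage_data s hs0 hs1 x y hP1 hQ1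
  have hh := root_unique s hs0 hs1 _ _ a1 a2 a3 hg hne hf
  rw [hh] at a4 a5
  exact Prod.ext a4 a5
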